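/- Let α > 0 be a non-integer real number and let k_l, k_s, d_l, d_s, γ, T_i, T_∞, h₀ be positive constants with ω = √(d_l/d_s), and suppose h₀ > 2^α Γ(α/2 + 1) k_s T_i d_s^{(α−1)/2} / (T_∞ √π). Let ν be the unique positive solution of equation (24): −(k_s T_i d_s^{(α−1)/2} / (γ d_l^{(α+1)/2})) f₁(x) + (h₀ T_∞ / (γ 2^α d_l^{(α+1)/2})) f₂(x) = x^{α+1}. Define s(t) = 2ν√(d_l t); F_l = −2 h₀ T_∞ √(d_l) M(−α/2,1/2,−ν²) / [ k_l M(−α/2,1/2,−ν²) + 2√(d_l) h₀ ν M(−α/2+1/2,3/2,−ν²) ]; E_l = −ν M(−α/2+1/2,3/2,−ν²) F_l / M(−α/2,1/2,−ν²); F_s = −T_i 2^{α+1} d_s^{α/2} M(α/2+1/2,1/2,ν²ω²) / U(α/2+1/2,1/2,ν²ω²); E_s = −νω M(−α/2+1/2,3/2,−ν²ω²) F_s / M(−α/2,1/2,−ν²ω²); Ψ_l(x,t) = t^{α/2}[ E_l M(−α/2,1/2,−η_l²) + F_l η_l M(−α/2+1/2,3/2,−η_l²) ] with η_l = x/(2√(d_l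 t)); Ψ_s(x,t) = t^{α/2}[ E_s M(−α/2,1/2,−η_s²) + F_s η_s M(−α/2+1/2,3/2,−η_s²) ] with η_s = x/(2√(d_s t)). Then for all t > 0: (i) ∂Ψ_l/∂t = d_l ∂²Ψ_l/∂x² for 0 < x < s(t); (ii) ∂Ψ_s/∂t = d_s ∂²Ψ_s/∂x² for x > s(t); (iii) Ψ_l(s(t),t) = Ψ_s(s(t),t) = 0; (iv) k_s ∂Ψ_s/∂x(s(t),t) − k_l ∂Ψ_l/∂x(s(t),t) = γ s(t)^α s'(t); (v) k_l ∂Ψ_l/∂x(0,t) = h₀ t^{−1/2} ( Ψ_l(0,t) − T_∞ t^{α/2} ); and (vi) for every x > 0, lim_{t→0⁺} Ψ_s(x,t) = −T_i x^α. -/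

import Mathlib

noncomputable def poch (a : ℝ) (s : ℕ) : ℝ := ∏ i ∈ Finset.range s, (a + i)

/-- Kummer's confluent hypergeometric function `M(a,b,z)`,
defined by the everywhere-convergent series `M(a,b,z) = Σ_{s} (a)_s z^s / ((b)_s s!)`. -/
noncomputable def kummerM (a b z : ℝ) : ℝ :=
  ∑' s : ℕ, poch a s / (poch b s * (Nat.factorial s)) * z ^ s

/-- Tricomi's confluent hypergeometric function
`U(a,b,z) = (1/Γ(a)) ∫_0^∞ e^{−z t} t^{a−1} (1+t)^{b−a−1} dt`. -/
noncomputable def tricomiU (a b z : ℝ) : ℝ :=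
  (1 / Real.Gamma a) *
    ∫ t in Set.Ioi (0:ℝ), Real.exp (-z * t) * t ^ (a - 1) * (1 + t) ^ (b - a - 1)

/-!
In the variable `η = x / (2 √(d t))`, a function `t ^ (α / 2) * φ η` solves the heat equation
exactly when `φ` is a combination of `M(-α/2, 1/2, -η²)` and `η M(-α/2 + 1/2, 3/2, -η²)`. The free
boundary is a level curve of `η` for both phases, so each boundary condition there is an algebraic
condition on the two coefficients: when the combination vanishes at `η = z`, the Wronskian
`exp (-η²)` gives its derivative at `z`, and the energy balance becomes equation (24) for `ν`.

The initial condition is about `η → ∞`. Completing the square in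
`G(y) = ∫₀^∞ x ^ (2 a - 1) exp (-x² - 2 x y) dx`, with `a = α/2 + 1/2`, gives the growth of `G(-y)`
as `y → ∞`, while `G(y)` stays bounded; the even and odd parts of `G` are multiples of
`M(a, 1/2, y²)` and `y M(a + 1/2, 3/2, y²)`. Inserting Lévy's integral for `exp (-2 x y)` and
exchanging the integrals identifies `G(y)` with a multiple of `U(a, 1/2, y²)`. Hence the
combination vanishing at `z` is asymptotic to a multiple of `η ^ α U(a, 1/2, z²)`, which is why `U`
appears in the solid-phase coefficients.
-/

section KummerSeries

theorem poch_succ (a : ℝ) (n : ℕ) : poch a (n + 1) = poch a n * (a + n) :=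
  Finset.prod_range_succ _ n

theorem poch_succ' (a : ℝ) (n : ℕ) : poch a (n + 1) = a * poch (a + 1) n := by
  rw [poch, poch, Finset.prod_range_succ', mul_comm]
  push_cast
  rw [add_zero]
  congr! 2
  ring

theorem poch_pos {a : ℝ} (ha : 0 < a) (n : ℕ) : 0 < poch a n :=
  Finset.prod_pos fun i _ => by positivity

theorem poch_ne_zero {a : ℝ} (ha : ∀ n : ℕ, a + n ≠ 0) (n : ℕ) : poch a n ≠ 0 :=
  Finset.prod_ne_zero_iff.2 fun i _ => ha i

/-- The `n`-th Taylor coefficient `(a)_n / ((b)_n n!)` of Kummer's function `M(a, b, ·)`. -/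
noncomputable def kummerCoeff (a b : ℝ) (n : ℕ) : ℝ :=
  poch a n / (poch b n * n.factorial)

theorem kummerCoeff_zero (a b : ℝ) : kummerCoeff a b 0 = 1 := by
  simp [kummerCoeff, poch]

theorem kummerCoeff_nonneg {a b : ℝ} (ha : 0 < a) (hb : 0 < b) (n : ℕ) :
    0 ≤ kummerCoeff a b n := by
  have := poch_pos ha n
  have := poch_pos hb n
  unfold kummerCoeff
  positivity

theorem kummerCoeff_succ (a b : ℝ) (n : ℕ) :
    kummerCoeff a b (n + 1) = kummerCoeff a b n * ((a + n) / ((b + n) * (n + 1))) := by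
  simp only [kummerCoeff, poch_succ, Nat.factorial_succ]
  push_cast
  rw [div_mul_div_comm]
  ring

theorem succ_mul_kummerCoeff_succ (a b : ℝ) (n : ℕ) :
    (n + 1) * kummerCoeff a b (n + 1) = a / b * kummerCoeff (a + 1) (b + 1) n := by
  simp only [kummerCoeff, poch_succ', Nat.factorial_succ]
  push_cast
  field_simp

theorem kummerCoeff_add_one_left (a b : ℝ) (n : ℕ) :
    kummerCoeff (a + 1) b (n + 1)
      = kummerCoeff a b (n + 1) + kummerCoeff (a + 1) (b + 1) n / b := by
  simp only [kummerCoeff, poch_succ (a + 1), poch_succ' a, poch_succ' b, Nat.factorial_succ]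
  push_cast
  field_simp
  ring

theorem add_mul_kummerCoeff_add_one_right (a : ℝ) {b : ℝ} (hb : ∀ n : ℕ, b + n ≠ 0) (n : ℕ) :
    (b + n) * kummerCoeff a (b + 1) n = b * kummerCoeff a b n := by
  have hpoch : b * poch (b + 1) n = poch b n * (b + n) := by rw [← poch_succ', poch_succ]
  have h₀ := poch_ne_zero hb n
  have h₁ : poch (b + 1) n ≠ 0 := right_ne_zero_of_mul (hpoch ▸ mul_ne_zero h₀ (hb n))
  rw [kummerCoeff, kummerCoeff]
  field_simp
  linear_combination -poch a n * hpoch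

theorem summable_kummerCoeff_mul_pow (a b z : ℝ) :
    Summable fun n => kummerCoeff a b n * z ^ n := by
  have hratio : Filter.Tendsto (fun n : ℕ => |(a + n) / ((b + n) * (n + 1)) * z|)
      Filter.atTop (nhds 0) := by
    have h₁ : Filter.Tendsto (fun n : ℕ => (a + (1 : ℝ) * n) / (b + 1 * n))
        Filter.atTop (nhds (1 / 1)) := tendsto_add_mul_div_add_mul_atTop_nhds a b 1 one_ne_zero
    have h₂ := (h₁.mul tendsto_one_div_add_atTop_nhds_zero_nat).mul_const z
    simpa [div_eq_mul_inv, mul_inv, mul_assoc, mul_left_comm] using h₂.abs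
  refine summable_of_ratio_norm_eventually_le (r := 1 / 2) (by norm_num) ?_
  filter_upwards [hratio.eventually_le_const (show (0 : ℝ) < 1 / 2 by norm_num)] with n hn
  calc ‖kummerCoeff a b (n + 1) * z ^ (n + 1)‖
      = |(a + n) / ((b + n) * (n + 1)) * z| * ‖kummerCoeff a b n * z ^ n‖ := by
        rw [Real.norm_eq_abs, Real.norm_eq_abs, ← abs_mul, kummerCoeff_succ]
        ring_nf
    _ ≤ 1 / 2 * ‖kummerCoeff a b n * z ^ n‖ := by gcongr

theorem hasSum_kummerM (a b z : ℝ) :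
    HasSum (fun n => kummerCoeff a b n * z ^ n) (kummerM a b z) :=
  (summable_kummerCoeff_mul_pow a b z).hasSum

theorem kummerM_zero (a b : ℝ) : kummerM a b 0 = 1 := by
  refine (hasSum_kummerM a b 0).unique ?_
  simpa [kummerCoeff_zero] using
    hasSum_single 0 (f := fun n => kummerCoeff a b n * 0 ^ n) (by simp +contextual)

theorem kummerM_pos {a b z : ℝ} (ha : 0 < a) (hb : 0 < b) (hz : 0 ≤ z) : 0 < kummerM a b z :=
  calc (0 : ℝ) < kummerCoeff a b 0 * z ^ 0 := by simp [kummerCoeff_zero]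
    _ ≤ kummerM a b z := le_hasSum (hasSum_kummerM a b z) 0 fun n _ =>
        mul_nonneg (kummerCoeff_nonneg ha hb n) (pow_nonneg hz n)

theorem hasSum_natCast_mul_kummerCoeff (a b z : ℝ) :
    HasSum (fun n : ℕ => n * kummerCoeff a b n * z ^ (n - 1))
      (a / b * kummerM (a + 1) (b + 1) z) := by
  rw [← hasSum_nat_add_iff' 1]
  simpa [succ_mul_kummerCoeff_succ, mul_assoc] using
    (hasSum_kummerM (a + 1) (b + 1) z).mul_left (a / b)

theorem hasDerivAt_kummerM (a b z : ℝ) :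
    HasDerivAt (kummerM a b) (a / b * kummerM (a + 1) (b + 1) z) z := by
  have hbound : ∀ (n : ℕ), ∀ y ∈ Metric.ball (0 : ℝ) (|z| + 1),
      ‖n * kummerCoeff a b n * y ^ (n - 1)‖ ≤ |n * kummerCoeff a b n * (|z| + 1) ^ (n - 1)| := by
    intro n y hy
    have hy' : |y| ≤ |(|z| + 1)| := by
      rw [abs_of_pos (by positivity : 0 < |z| + 1)]
      simpa using (Metric.mem_ball.1 hy).le
    rw [Real.norm_eq_abs, abs_mul, abs_mul _ ((|z| + 1) ^ _), abs_pow, abs_pow]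
    gcongr
  rw [← (hasSum_natCast_mul_kummerCoeff a b z).tsum_eq]
  refine hasDerivAt_tsum_of_isPreconnected (g := fun n z => kummerCoeff a b n * z ^ n)
    (hasSum_natCast_mul_kummerCoeff a b (|z| + 1)).summable.abs Metric.isOpen_ball
    (convex_ball 0 _).isPreconnected (fun n y _ => ?_) hbound
    (Metric.mem_ball_self (by positivity)) (summable_kummerCoeff_mul_pow a b 0) (by simp)
  exact ((hasDerivAt_pow n y).const_mul (kummerCoeff a b n)).congr_deriv (by ring)

theorem kummerM_add_one_left (a b z : ℝ) :
    kummerM (a + 1) b z = kummerM a b z + z / b * kummerM (a + 1) (b + 1) z := by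
  have hshift := (hasSum_kummerM (a + 1) (b + 1) z).mul_left (z / b)
  have hdiff := (hasSum_kummerM (a + 1) b z).sub (hasSum_kummerM a b z)
  rw [← hasSum_nat_add_iff' 1] at hdiff
  simp only [Finset.sum_range_one, kummerCoeff_zero, sub_self, sub_zero] at hdiff
  rw [← sub_eq_iff_eq_add']
  refine hdiff.unique (hshift.congr_fun fun n => ?_)
  rw [kummerCoeff_add_one_left]
  ring

theorem mul_kummerM_eq_add_deriv (a : ℝ) {b : ℝ} (hb : ∀ n : ℕ, b + n ≠ 0) (z : ℝ) :
    b * kummerM a b z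
      = b * kummerM a (b + 1) z + z * (a / (b + 1) * kummerM (a + 1) (b + 1 + 1) z) := by
  refine ((hasSum_kummerM a b z).mul_left b).unique ?_
  have hderiv := (hasSum_natCast_mul_kummerCoeff a (b + 1) z).mul_left z
  refine (((hasSum_kummerM a (b + 1) z).mul_left b).add hderiv).congr_fun fun n => ?_
  rw [← mul_assoc, ← add_mul_kummerCoeff_add_one_right a hb n]
  rcases n with _ | n
  · simp
  · rw [Nat.add_sub_cancel]
    ring

end KummerSeries

section KummerTransformation

open Finset

theorem poch_chu_vandermonde (n : ℕ) (a : ℝ) {b : ℝ}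
    (hb : ∀ m : ℕ, b + m ≠ 0) :
    ∑ ij ∈ antidiagonal n, (n.choose ij.1 : ℝ) * ((-1) ^ ij.1 * (poch a ij.1 / poch b ij.1))
      = poch (b - a) n / poch b n := by
  induction n generalizing a b with
  | zero => simp [poch]
  | succ n ih =>
    have hb' : ∀ m : ℕ, b + 1 + m ≠ 0 := fun m => by
      simpa [add_assoc, add_comm (1 : ℝ)] using hb (m + 1)
    have hshift : ∑ ij ∈ antidiagonal n,
        (n.choose ij.2 : ℝ) * ((-1) ^ (ij.1 + 1) * (poch a (ij.1 + 1) / poch b (ij.1 + 1)))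
          = -(a / b) * (poch (b - a) n / poch (b + 1) n) := by
      rw [show b - a = b + 1 - (a + 1) by ring, ← ih (a + 1) hb', mul_sum]
      refine sum_congr rfl fun ij hij => ?_
      rw [← Nat.choose_symm_of_eq_add (mem_antidiagonal.1 hij).symm, poch_succ', poch_succ',
        mul_div_mul_comm]
      ring
    have hpoch : b * poch (b + 1) n = poch b n * (b + n) := by rw [← poch_succ', poch_succ]
    rw [sum_antidiagonal_choose_succ_mul
      (fun i _ => (-1) ^ i * (poch a i / poch b i)), ih a hb, hshift, poch_succ, poch_succ]
    have h₀ := poch_ne_zero hb n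
    have h₁ := poch_ne_zero hb' n
    have h₂ : b ≠ 0 := by simpa using hb 0
    have h₃ := hb n
    field_simp
    linear_combination (poch (b - a) n * a) * hpoch

theorem exp_mul_kummerM_neg (a : ℝ) {b : ℝ} (hb : ∀ n : ℕ, b + n ≠ 0) (z : ℝ) :
    Real.exp z * kummerM a b (-z) = kummerM (b - a) b z := by
  have hexp : HasSum (fun n : ℕ => z ^ n / n.factorial) (Real.exp z) := by
    rw [Real.exp_eq_exp_ℝ]
    exact NormedSpace.expSeries_div_hasSum_exp z
  have hM := hasSum_kummerM a b (-z)
  rw [mul_comm, ← hexp.tsum_eq, ← hM.tsum_eq,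
    tsum_mul_tsum_eq_tsum_sum_antidiagonal_of_summable_norm hM.summable.norm hexp.summable.norm,
    ← (hasSum_kummerM (b - a) b z).tsum_eq]
  refine tsum_congr fun n => ?_
  rw [kummerCoeff, ← div_div,
    ← poch_chu_vandermonde n a hb, sum_div, sum_mul]
  refine sum_congr rfl fun ij hij => ?_
  obtain rfl := mem_antidiagonal.1 hij
  rw [kummerCoeff, Nat.cast_add_choose, neg_pow, pow_add]
  field_simp

end KummerTransformation

section GaussianLaplace

open MeasureTheory Set Filter Topology

theorem gamma_add_natCast {a : ℝ} (ha : 0 < a) (n : ℕ) :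
    Real.Gamma (a + n) = poch a n * Real.Gamma a := by
  induction n with
  | zero => simp [poch]
  | succ n ih =>
    rw [Nat.cast_succ, ← add_assoc, Real.Gamma_add_one (by positivity), ih, poch_succ]
    ring

theorem factorial_two_mul (n : ℕ) :
    ((2 * n).factorial : ℝ) = 4 ^ n * poch (1 / 2) n * n.factorial := by
  induction n with
  | zero => simp [poch]
  | succ n ih =>
    rw [show 2 * (n + 1) = 2 * n + 1 + 1 by ring, Nat.factorial_succ, Nat.factorial_succ,
      Nat.factorial_succ, poch_succ]
    push_cast
    rw [ih]
    ring

theorem factorial_two_mul_add_one (n : ℕ) :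
    ((2 * n + 1).factorial : ℝ) = 4 ^ n * poch (3 / 2) n * n.factorial := by
  induction n with
  | zero => simp [poch]
  | succ n ih =>
    rw [show 2 * (n + 1) + 1 = 2 * n + 1 + 1 + 1 by ring, Nat.factorial_succ,
      Nat.factorial_succ (2 * n + 1), Nat.factorial_succ n, poch_succ]
    push_cast
    rw [ih]
    ring

theorem integral_rpow_mul_exp_neg_mul_sq {b q : ℝ} (hb : 0 < b) (hq : -1 < q) :
    ∫ x in Ioi (0 : ℝ), x ^ q * Real.exp (-b * x ^ 2)
      = b ^ (-((q + 1) / 2)) * (Real.Gamma ((q + 1) / 2) / 2) := by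
  have h := integral_rpow_mul_exp_neg_mul_rpow two_pos hq hb
  simp only [Real.rpow_two] at h
  rw [h, neg_div]
  ring

/-- The Laplace-type transform `∫ x ^ (2 a - 1) exp (- x ^ 2 - 2 x y) dx` over `x > 0`, through
which both Kummer's and Tricomi's functions with second parameter `1 / 2` are expressed. -/
noncomputable def gaussLaplace (a y : ℝ) : ℝ :=
  ∫ x in Ioi (0 : ℝ), x ^ (2 * a - 1) * Real.exp (-x ^ 2 - 2 * x * y)

theorem integrableOn_gaussLaplace {a : ℝ} (ha : 0 < a) (y : ℝ) :
    IntegrableOn (fun x : ℝ => x ^ (2 * a - 1) * Real.exp (-x ^ 2 - 2 * x * y)) (Ioi 0) := by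
  have hdom := (integrableOn_rpow_mul_exp_neg_mul_sq (b := 1 / 2) (by norm_num)
    (show -1 < 2 * a - 1 by linarith)).mul_const (Real.exp (2 * y ^ 2))
  refine Integrable.mono' hdom (Measurable.aestronglyMeasurable (by fun_prop)) ?_
  filter_upwards [ae_restrict_mem measurableSet_Ioi] with x hx
  have : 0 < x := hx
  rw [Real.norm_of_nonneg (by positivity), mul_assoc (x ^ (2 * a - 1)), ← Real.exp_add]
  gcongr
  nlinarith [sq_nonneg (x + 2 * y)]

theorem gaussLaplace_pos {a : ℝ} (ha : 0 < a) (y : ℝ) : 0 < gaussLaplace a y := by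
  have hpos : ∀ x ∈ Ioi (0 : ℝ), 0 < x ^ (2 * a - 1) * Real.exp (-x ^ 2 - 2 * x * y) :=
    fun x hx => mul_pos (Real.rpow_pos_of_pos hx _) (Real.exp_pos _)
  refine (setIntegral_pos_iff_support_of_nonneg_ae ?_ (integrableOn_gaussLaplace ha y)).2 ?_
  · filter_upwards [ae_restrict_mem measurableSet_Ioi] with x hx using (hpos x hx).le
  · rw [inter_eq_right.2 fun x hx => Function.mem_support.2 (hpos x hx).ne']
    simp

theorem antitone_gaussLaplace {a : ℝ} (ha : 0 < a) : Antitone (gaussLaplace a) := by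
  intro y₁ y₂ hy
  refine setIntegral_mono_on (integrableOn_gaussLaplace ha y₂) (integrableOn_gaussLaplace ha y₁)
    measurableSet_Ioi fun x hx => ?_
  have : 0 < x := hx
  gcongr

theorem hasSum_two_mul_pow_div_factorial_mul_Gamma {a : ℝ} (ha : 0 < a) (y : ℝ) :
    HasSum (fun k : ℕ => (2 * y) ^ k / k.factorial * Real.Gamma (a + k / 2))
      (Real.Gamma a * kummerM a (1 / 2) (y ^ 2)
        + 2 * Real.Gamma (a + 1 / 2) * y * kummerM (a + 1 / 2) (3 / 2) (y ^ 2)) := by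
  refine HasSum.even_add_odd ?_ ?_
  · refine ((hasSum_kummerM a (1 / 2) (y ^ 2)).mul_left _).congr_fun fun n => ?_
    rw [show a + ((2 * n : ℕ) : ℝ) / 2 = a + n by push_cast; ring, gamma_add_natCast ha,
      factorial_two_mul, kummerCoeff, pow_mul, mul_pow 2 y 2, mul_pow]
    norm_num
    field_simp
  · refine ((hasSum_kummerM (a + 1 / 2) (3 / 2) (y ^ 2)).mul_left _).congr_fun fun n => ?_
    rw [show a + ((2 * n + 1 : ℕ) : ℝ) / 2 = a + 1 / 2 + n by push_cast; ring,
      gamma_add_natCast (by positivity), factorial_two_mul_add_one, kummerCoeff, pow_succ,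
      pow_mul, mul_pow 2 y 2, mul_pow]
    norm_num
    field_simp

-- Expand `exp (-2 * x * y)` in powers of `y` and integrate term by term.
theorem two_mul_gaussLaplace {a : ℝ} (ha : 0 < a) (y : ℝ) :
    2 * gaussLaplace a y = Real.Gamma a * kummerM a (1 / 2) (y ^ 2)
      - 2 * Real.Gamma (a + 1 / 2) * y * kummerM (a + 1 / 2) (3 / 2) (y ^ 2) := by
  set term : ℝ → ℕ → ℝ → ℝ := fun y k x =>
    (2 * y) ^ k / k.factorial * (x ^ (2 * a - 1 + k) * Real.exp (-1 * x ^ 2)) with hterm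
  have hexponent (k : ℕ) : -1 < 2 * a - 1 + k := by linarith [k.cast_nonneg (α := ℝ)]
  have hintegral (y : ℝ) (k : ℕ) : ∫ x in Ioi 0, term y k x
      = (2 * y) ^ k / k.factorial * Real.Gamma (a + k / 2) / 2 := by
    simp only [hterm]
    rw [integral_const_mul, integral_rpow_mul_exp_neg_mul_sq one_pos (hexponent k), Real.one_rpow]
    ring_nf
  have hnorm (k : ℕ) : ∫ x in Ioi 0, ‖term (-y) k x‖ = ∫ x in Ioi 0, term |y| k x :=
    setIntegral_congr_fun measurableSet_Ioi fun x hx => by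
      have : 0 < x := hx
      simp only [hterm, Real.norm_eq_abs, abs_mul, abs_div, abs_pow, Real.abs_exp, abs_neg,
        abs_of_pos (Real.rpow_pos_of_pos this _), Nat.abs_cast, abs_two]
  have hsum (y : ℝ) := (hasSum_two_mul_pow_div_factorial_mul_Gamma ha y).div_const 2
  have hexchange := hasSum_integral_of_summable_integral_norm (F := term (-y))
    (μ := volume.restrict (Ioi 0))
    (fun k => (integrableOn_rpow_mul_exp_neg_mul_sq one_pos (hexponent k)).const_mul _)
    (by simpa only [hnorm, hintegral] using (hsum |y|).summable)
  have hsumF : ∫ x in Ioi 0, ∑' k, term (-y) k x = gaussLaplace a y := by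
    refine setIntegral_congr_fun measurableSet_Ioi fun x hx => ?_
    have hexp := NormedSpace.expSeries_div_hasSum_exp (-(2 * x * y))
    rw [← Real.exp_eq_exp_ℝ] at hexp
    rw [sub_eq_add_neg (-x ^ 2), Real.exp_add, ← mul_assoc, ← (hexp.mul_left _).tsum_eq]
    refine tsum_congr fun k => ?_
    simp only [hterm, neg_one_mul]
    rw [Real.rpow_add hx, Real.rpow_natCast]
    ring
  simp only [hintegral, hsumF] at hexchange
  rw [hexchange.unique (hsum (-y)), neg_sq]
  ring

end GaussianLaplace

section GaussianLaplaceAsymptotics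

open MeasureTheory Set Filter Topology

theorem one_add_div_pos {y w : ℝ} (hy : 0 < y) (hw : -y < w) : 0 < 1 + w / y := by
  rw [one_add_div hy.ne']
  exact div_pos (by linarith) hy

-- Substitute `x = w + y`, which completes the square in the exponent.
theorem exp_neg_sq_mul_gaussLaplace_neg_div (a : ℝ) {y : ℝ} (hy : 0 < y) :
    Real.exp (-y ^ 2) * gaussLaplace a (-y) / y ^ (2 * a - 1)
      = ∫ w, (Ioi (-y)).indicator (fun w => (1 + w / y) ^ (2 * a - 1) * Real.exp (-w ^ 2)) w := by
  rw [gaussLaplace, mul_div_right_comm, ← integral_const_mul,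
    ← integral_indicator measurableSet_Ioi, ← integral_add_right_eq_self _ y]
  refine integral_congr_ae (.of_forall fun w => ?_)
  by_cases hw : -y < w
  · have hw₀ : 0 < w + y := by linarith
    have hscale : 1 + w / y = (w + y) / y := by rw [one_add_div hy.ne', add_comm]
    have hsquare : Real.exp (-y ^ 2) * Real.exp (-(w + y) ^ 2 - 2 * (w + y) * -y)
        = Real.exp (-w ^ 2) := by rw [← Real.exp_add]; ring_nf
    simp only [indicator_of_mem (mem_Ioi.2 hw), indicator_of_mem (mem_Ioi.2 hw₀)]
    rw [hscale, Real.div_rpow hw₀.le hy.le, ← hsquare]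
    ring
  · have hw₀ : ¬ 0 < w + y := by linarith
    simp only [indicator_of_notMem (notMem_Ioi.2 (not_lt.1 hw)),
      indicator_of_notMem (notMem_Ioi.2 (not_lt.1 hw₀))]

theorem one_add_div_rpow_mul_exp_neg_sq_le {p y w : ℝ} (hp : 0 ≤ p) (hy : 1 ≤ y) (hw : -y < w) :
    (1 + w / y) ^ p * Real.exp (-w ^ 2) ≤ Real.exp (p ^ 2 / 2) * Real.exp (-(1 / 2) * w ^ 2) := by
  have hy₀ : 0 < y := by linarith
  have hbase := one_add_div_pos hy₀ hw
  have hexp : 1 + w / y ≤ Real.exp |w| :=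
    calc 1 + w / y ≤ |w| + 1 := by
          rw [add_comm]
          gcongr
          exact (div_le_div_of_nonneg_right (le_abs_self w) hy₀.le).trans
            (div_le_self (abs_nonneg w) hy)
      _ ≤ Real.exp |w| := Real.add_one_le_exp _
  calc (1 + w / y) ^ p * Real.exp (-w ^ 2)
      ≤ Real.exp |w| ^ p * Real.exp (-w ^ 2) := by gcongr
    _ = Real.exp (|w| * p - w ^ 2) := by rw [← Real.exp_mul, ← Real.exp_add, sub_eq_add_neg]
    _ ≤ Real.exp (p ^ 2 / 2 + -(1 / 2) * w ^ 2) := by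
        gcongr
        nlinarith [sq_nonneg (|w| - p), sq_abs w]
    _ = Real.exp (p ^ 2 / 2) * Real.exp (-(1 / 2) * w ^ 2) := Real.exp_add _ _

theorem tendsto_exp_neg_sq_mul_gaussLaplace_neg_div {a : ℝ} (ha : 1 / 2 ≤ a) :
    Tendsto (fun y => Real.exp (-y ^ 2) * gaussLaplace a (-y) / y ^ (2 * a - 1)) atTop
      (𝓝 √Real.pi) := by
  have hp : 0 ≤ 2 * a - 1 := by linarith
  have hgauss : ∫ w : ℝ, Real.exp (-w ^ 2) = √Real.pi := by simpa using integral_gaussian 1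
  rw [← hgauss]
  refine Tendsto.congr' (f₁ := fun y => ∫ w, (Ioi (-y)).indicator
    (fun w => (1 + w / y) ^ (2 * a - 1) * Real.exp (-w ^ 2)) w) ?_ ?_
  · filter_upwards [eventually_gt_atTop 0] with y hy
    exact (exp_neg_sq_mul_gaussLaplace_neg_div a hy).symm
  refine tendsto_integral_filter_of_dominated_convergence
    (fun w => Real.exp ((2 * a - 1) ^ 2 / 2) * Real.exp (-(1 / 2) * w ^ 2)) ?_ ?_
    ((integrable_exp_neg_mul_sq (by norm_num)).const_mul _) (.of_forall fun w => ?_)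
  · exact .of_forall fun y =>
      ((Measurable.aestronglyMeasurable (by fun_prop)).indicator measurableSet_Ioi)
  · filter_upwards [eventually_ge_atTop 1] with y hy
    refine .of_forall fun w => ?_
    by_cases hw : -y < w
    · have hbase := one_add_div_pos (zero_lt_one.trans_le hy) hw
      rw [indicator_of_mem (mem_Ioi.2 hw), Real.norm_of_nonneg (by positivity)]
      exact one_add_div_rpow_mul_exp_neg_sq_le hp hy hw
    · rw [indicator_of_notMem (notMem_Ioi.2 (not_lt.1 hw)), norm_zero]
      positivity
  · have hlim : Tendsto (fun y : ℝ => 1 + w / y) atTop (𝓝 1) := by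
      simpa using (tendsto_const_nhds.div_atTop (tendsto_id (α := ℝ))).const_add (1 : ℝ)
    have hprod : Tendsto (fun y : ℝ => (1 + w / y) ^ (2 * a - 1) * Real.exp (-w ^ 2)) atTop
        (𝓝 (Real.exp (-w ^ 2))) := by
      simpa using (hlim.rpow_const (.inr hp)).mul_const (Real.exp (-w ^ 2))
    refine hprod.congr' ?_
    filter_upwards [eventually_gt_atTop (-w)] with y hy
    rw [indicator_of_mem (mem_Ioi.2 (by linarith))]

theorem tendsto_exp_neg_sq_mul_gaussLaplace_div {a : ℝ} (ha : 1 / 2 ≤ a) :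
    Tendsto (fun y => Real.exp (-y ^ 2) * gaussLaplace a y / y ^ (2 * a - 1)) atTop (𝓝 0) := by
  have ha₀ : 0 < a := by linarith
  have hdecay : Tendsto (fun y : ℝ => Real.exp (-y ^ 2) * gaussLaplace a 0) atTop (𝓝 0) := by
    have := Real.tendsto_exp_neg_atTop_nhds_zero.comp (tendsto_pow_atTop (α := ℝ) two_ne_zero)
    simpa using this.mul_const (gaussLaplace a 0)
  refine squeeze_zero' ?_ ?_ hdecay
  · filter_upwards [eventually_ge_atTop 0] with y hy
    have := gaussLaplace_pos ha₀ y
    positivity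
  · filter_upwards [eventually_ge_atTop 1] with y hy
    have hpow : 1 ≤ y ^ (2 * a - 1) := Real.one_le_rpow hy (by linarith)
    have := gaussLaplace_pos ha₀ y
    calc Real.exp (-y ^ 2) * gaussLaplace a y / y ^ (2 * a - 1)
        ≤ Real.exp (-y ^ 2) * gaussLaplace a y := div_le_self (by positivity) hpow
      _ ≤ Real.exp (-y ^ 2) * gaussLaplace a 0 := by
          gcongr
          exact antitone_gaussLaplace ha₀ (by linarith)

end GaussianLaplaceAsymptotics

section LevyIntegral

open MeasureTheory Set Filter Topology

theorem integrableOn_and_integral_Ioi_of_hasDerivAt_of_tendsto {f f' : ℝ → ℝ} {a l r : ℝ}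
    (hderiv : ∀ x ∈ Ioi a, HasDerivAt f (f' x) x) (hnonneg : ∀ x ∈ Ioi a, 0 ≤ f' x)
    (hl : Tendsto f (𝓝[>] a) (𝓝 l)) (hr : Tendsto f atTop (𝓝 r)) :
    IntegrableOn f' (Ioi a) ∧ ∫ x in Ioi a, f' x = r - l := by
  have hcont : ContinuousWithinAt (Function.update f a l) (Ici a) a := by
    rwa [continuousWithinAt_update_same, Ici_sdiff_left]
  have hderiv' : ∀ x ∈ Ioi a, HasDerivAt (Function.update f a l) (f' x) x := fun x hx =>
    (hderiv x hx).congr_of_eventuallyEq <| by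
      filter_upwards [lt_mem_nhds hx] with u hu using Function.update_of_ne hu.ne' _ _
  have hr' : Tendsto (Function.update f a l) atTop (𝓝 r) := hr.congr' <| by
    filter_upwards [eventually_gt_atTop a] with u hu using (Function.update_of_ne hu.ne' _ _).symm
  refine ⟨integrableOn_Ioi_deriv_of_nonneg hcont hderiv' hnonneg hr', ?_⟩
  rw [integral_Ioi_of_hasDerivAt_of_nonneg hcont hderiv' hnonneg hr', Function.update_self]

/-- The odd primitive of the Gaussian `exp (- w ^ 2)`: the error function scaled by `√π / 2`. -/
noncomputable def gaussPrimitive (y : ℝ) : ℝ := ∫ w in (0 : ℝ)..y, Real.exp (-w ^ 2)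

theorem hasDerivAt_gaussPrimitive (y : ℝ) : HasDerivAt gaussPrimitive (Real.exp (-y ^ 2)) y :=
  have hcont : Continuous fun w : ℝ => Real.exp (-w ^ 2) := by fun_prop
  intervalIntegral.integral_hasDerivAt_right (hcont.intervalIntegrable _ _)
    (hcont.stronglyMeasurableAtFilter _ _) hcont.continuousAt

theorem tendsto_gaussPrimitive_atTop : Tendsto gaussPrimitive atTop (𝓝 (√Real.pi / 2)) := by
  have hint : Integrable fun w : ℝ => Real.exp (-w ^ 2) := by
    simpa using integrable_exp_neg_mul_sq one_pos
  have hval : ∫ w in Ioi (0 : ℝ), Real.exp (-w ^ 2) = √Real.pi / 2 := by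
    simpa using integral_gaussian_Ioi 1
  rw [← hval]
  exact intervalIntegral_tendsto_integral_Ioi 0 hint.integrableOn tendsto_id

theorem gaussPrimitive_neg (y : ℝ) : gaussPrimitive (-y) = -gaussPrimitive y := by
  have := intervalIntegral.integral_comp_neg (a := 0) (b := y) fun w : ℝ => Real.exp (-w ^ 2)
  simp only [neg_sq, neg_zero] at this
  rw [gaussPrimitive, gaussPrimitive, this, intervalIntegral.integral_symm]

theorem tendsto_gaussPrimitive_atBot : Tendsto gaussPrimitive atBot (𝓝 (-(√Real.pi / 2))) := by
  simpa [Function.comp_def, gaussPrimitive_neg] using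
    (tendsto_gaussPrimitive_atTop.comp tendsto_neg_atBot_atTop).neg

/-- Half of a primitive of Lévy's density: adding the values at `c` and `-c` gives a primitive of
`p / (t √t) exp (- p ^ 2 / t - c ^ 2 t)`. -/
noncomputable def levyPrimitive (p c t : ℝ) : ℝ :=
  Real.exp (-(2 * p * c)) * gaussPrimitive (c * √t - p / √t)

theorem hasDerivAt_levyPrimitive (p c : ℝ) {t : ℝ} (ht : 0 < t) :
    HasDerivAt (levyPrimitive p c)
      ((p / (2 * (t * √t)) + c / (2 * √t)) * Real.exp (-(p ^ 2 / t) - c ^ 2 * t)) t := by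
  have hr : 0 < √t := Real.sqrt_pos.2 ht
  have hsqrt := Real.hasDerivAt_sqrt ht.ne'
  have harg := (hsqrt.const_mul c).sub ((hasDerivAt_const t p).div hsqrt hr.ne')
  have hgauss := ((hasDerivAt_gaussPrimitive _).comp t harg).const_mul (Real.exp (-(2 * p * c)))
  refine hgauss.congr_deriv ?_
  have hexp : Real.exp (-(2 * p * c)) * Real.exp (-(c * √t - p / √t) ^ 2)
      = Real.exp (-(p ^ 2 / t) - c ^ 2 * t) := by
    rw [← Real.exp_add, sub_sq, mul_pow, div_pow, Real.sq_sqrt ht.le]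
    congr 1
    field_simp
    ring
  simp only [Pi.sub_apply, Pi.div_apply, Real.sq_sqrt ht.le] at hexp ⊢
  rw [← mul_assoc, hexp]
  field_simp
  ring

theorem tendsto_sqrt_nhdsGT_zero : Tendsto Real.sqrt (𝓝[>] 0) (𝓝[>] 0) := by
  refine tendsto_nhdsWithin_iff.2 ⟨?_, ?_⟩
  · exact (Real.continuous_sqrt.tendsto' 0 0 Real.sqrt_zero).mono_left nhdsWithin_le_nhds
  · filter_upwards [self_mem_nhdsWithin] with t ht using Real.sqrt_pos.2 ht

theorem tendsto_levyPrimitive_nhdsGT_zero {p : ℝ} (hp : 0 < p) (c : ℝ) :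
    Tendsto (levyPrimitive p c) (𝓝[>] 0) (𝓝 (Real.exp (-(2 * p * c)) * -(√Real.pi / 2))) := by
  have hlin : Tendsto (fun t => c * √t) (𝓝[>] 0) (𝓝 (c * 0)) :=
    (tendsto_sqrt_nhdsGT_zero.mono_right nhdsWithin_le_nhds).const_mul c
  have hdiv : Tendsto (fun t => p / √t) (𝓝[>] 0) atTop :=
    (tendsto_inv_nhdsGT_zero.comp tendsto_sqrt_nhdsGT_zero).const_mul_atTop hp
  refine (tendsto_gaussPrimitive_atBot.comp ?_).const_mul _
  simpa only [sub_eq_add_neg] using! hlin.add_atBot (tendsto_neg_atTop_atBot.comp hdiv)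

theorem tendsto_const_div_sqrt_atTop (p : ℝ) : Tendsto (fun t => p / √t) atTop (𝓝 0) :=
  tendsto_const_nhds.div_atTop Real.tendsto_sqrt_atTop

theorem tendsto_levyPrimitive_atTop_of_pos (p : ℝ) {c : ℝ} (hc : 0 < c) :
    Tendsto (levyPrimitive p c) atTop (𝓝 (Real.exp (-(2 * p * c)) * (√Real.pi / 2))) := by
  refine (tendsto_gaussPrimitive_atTop.comp ?_).const_mul _
  simpa only [sub_eq_add_neg] using
    (Real.tendsto_sqrt_atTop.const_mul_atTop hc).atTop_add (tendsto_const_div_sqrt_atTop p).neg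

theorem tendsto_levyPrimitive_atTop_of_neg (p : ℝ) {c : ℝ} (hc : c < 0) :
    Tendsto (levyPrimitive p c) atTop (𝓝 (Real.exp (-(2 * p * c)) * -(√Real.pi / 2))) := by
  refine (tendsto_gaussPrimitive_atBot.comp ?_).const_mul _
  simpa only [sub_eq_add_neg] using
    (Real.tendsto_sqrt_atTop.const_mul_atTop_of_neg hc).atBot_add
      (tendsto_const_div_sqrt_atTop p).neg

theorem integrableOn_and_integral_levy {p y : ℝ} (hp : 0 < p) (hy : 0 < y) :
    IntegrableOn (fun t => p / (t * √t) * Real.exp (-(p ^ 2 / t) - y ^ 2 * t)) (Ioi 0) ∧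
      ∫ t in Ioi (0 : ℝ), p / (t * √t) * Real.exp (-(p ^ 2 / t) - y ^ 2 * t)
        = √Real.pi * Real.exp (-(2 * p * y)) := by
  have hderiv : ∀ t ∈ Ioi (0 : ℝ),
      HasDerivAt (fun t => levyPrimitive p y t + levyPrimitive p (-y) t)
        (p / (t * √t) * Real.exp (-(p ^ 2 / t) - y ^ 2 * t)) t := fun t ht => by
    refine ((hasDerivAt_levyPrimitive p y ht).add
      (hasDerivAt_levyPrimitive p (-y) ht)).congr_deriv ?_
    rw [neg_sq]
    ring
  have hnonneg : ∀ t ∈ Ioi (0 : ℝ), 0 ≤ p / (t * √t) * Real.exp (-(p ^ 2 / t) - y ^ 2 * t) :=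
    fun t ht => by
      have : 0 < t := ht
      positivity
  obtain ⟨hint, hval⟩ := integrableOn_and_integral_Ioi_of_hasDerivAt_of_tendsto hderiv hnonneg
    ((tendsto_levyPrimitive_nhdsGT_zero hp y).add (tendsto_levyPrimitive_nhdsGT_zero hp (-y)))
    ((tendsto_levyPrimitive_atTop_of_pos p hy).add
      (tendsto_levyPrimitive_atTop_of_neg p (neg_neg_of_pos hy)))
  exact ⟨hint, hval.trans (by ring)⟩

end LevyIntegral

section TricomiFunction

open MeasureTheory Set

/-- The kernel on the positive quadrant whose two iterated integrals are, up to constants,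
`gaussLaplace a y` and `tricomiU a (1 / 2) (y ^ 2)`. -/
noncomputable def tricomiKernel (a y x t : ℝ) : ℝ :=
  x ^ (2 * a - 1) * Real.exp (-x ^ 2) *
    (x / (t * √t) * Real.exp (-(x ^ 2 / t) - y ^ 2 * t))

theorem tricomiKernel_nonneg (a y : ℝ) {x t : ℝ} (hx : 0 ≤ x) (ht : 0 ≤ t) :
    0 ≤ tricomiKernel a y x t := by
  unfold tricomiKernel
  positivity

theorem integral_tricomiKernel_snd (a : ℝ) {y x : ℝ} (hy : 0 < y) (hx : 0 < x) :
    ∫ t in Ioi 0, tricomiKernel a y x t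
      = √Real.pi * (x ^ (2 * a - 1) * Real.exp (-x ^ 2 - 2 * x * y)) := by
  simp only [tricomiKernel]
  rw [integral_const_mul, (integrableOn_and_integral_levy hx hy).2, sub_eq_add_neg (-x ^ 2),
    Real.exp_add]
  ring

theorem integral_tricomiKernel_fst {a : ℝ} (ha : -1 / 2 < a) (y : ℝ) {t : ℝ} (ht : 0 < t) :
    ∫ x in Ioi 0, tricomiKernel a y x t
      = Real.Gamma (a + 1 / 2) / 2 *
        (Real.exp (-y ^ 2 * t) * t ^ (a - 1) * (1 + t) ^ (1 / 2 - a - 1)) := by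
  have hkernel : ∀ x ∈ Ioi (0 : ℝ), tricomiKernel a y x t
      = Real.exp (-y ^ 2 * t) / (t * √t) * (x ^ (2 * a) * Real.exp (-((1 + t) / t) * x ^ 2)) := by
    intro x hx
    have hexp : Real.exp (-x ^ 2) * Real.exp (-(x ^ 2 / t) - y ^ 2 * t)
        = Real.exp (-y ^ 2 * t) * Real.exp (-((1 + t) / t) * x ^ 2) := by
      rw [← Real.exp_add, ← Real.exp_add]
      congr 1
      field_simp
      ring
    have hpow : x ^ (2 * a) = x ^ (2 * a - 1) * x := by
      rw [← Real.rpow_add_one (ne_of_gt hx), sub_add_cancel]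
    rw [tricomiKernel, hpow]
    linear_combination (x ^ (2 * a - 1) * x / (t * √t)) * hexp
  have hbase : ((1 + t) / t) ^ (-(a + 1 / 2))
      = t ^ (a - 1) * (t * √t) * (1 + t) ^ (1 / 2 - a - 1) := by
    rw [Real.div_rpow (by positivity) ht.le, Real.rpow_neg ht.le, div_inv_eq_mul, Real.sqrt_eq_rpow,
      ← Real.rpow_one_add' ht.le (by norm_num), ← Real.rpow_add ht, mul_comm]
    ring_nf
  rw [setIntegral_congr_fun measurableSet_Ioi hkernel, integral_const_mul,
    integral_rpow_mul_exp_neg_mul_sq (by positivity) (by linarith),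
    show (2 * a + 1) / 2 = a + 1 / 2 by ring, hbase]
  field_simp

theorem integrable_tricomiKernel {a y : ℝ} (ha : 0 < a) (hy : 0 < y) :
    Integrable (Function.uncurry (tricomiKernel a y))
      ((volume.restrict (Ioi 0)).prod (volume.restrict (Ioi 0))) := by
  have hmeas : Measurable (Function.uncurry (tricomiKernel a y)) := by
    unfold tricomiKernel Function.uncurry
    fun_prop
  refine (integrable_prod_iff hmeas.aestronglyMeasurable).2 ⟨?_, ?_⟩
  · filter_upwards [ae_restrict_mem measurableSet_Ioi] with x hx
    exact (integrableOn_and_integral_levy hx hy).1.const_mul (x ^ (2 * a - 1) * Real.exp (-x ^ 2))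
  · refine ((integrableOn_gaussLaplace ha y).const_mul √Real.pi).congr ?_
    filter_upwards [ae_restrict_mem measurableSet_Ioi] with x hx
    rw [← integral_tricomiKernel_snd a hy hx]
    exact setIntegral_congr_fun measurableSet_Ioi fun t ht =>
      (Real.norm_of_nonneg (tricomiKernel_nonneg a y (le_of_lt hx) (le_of_lt ht))).symm

theorem sqrt_pi_mul_gaussLaplace {a y : ℝ} (ha : 0 < a) (hy : 0 < y) :
    √Real.pi * gaussLaplace a y
      = Real.Gamma (a + 1 / 2) / 2 * (Real.Gamma a * tricomiU a (1 / 2) (y ^ 2)) := by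
  have hswap := integral_integral_swap (integrable_tricomiKernel ha hy)
  rw [setIntegral_congr_fun measurableSet_Ioi fun x hx => integral_tricomiKernel_snd a hy hx,
    setIntegral_congr_fun measurableSet_Ioi fun t ht =>
      integral_tricomiKernel_fst (by linarith) y ht,
    integral_const_mul, integral_const_mul] at hswap
  rw [tricomiU, ← mul_assoc (Real.Gamma a),
    mul_one_div_cancel (Real.Gamma_pos_of_pos ha).ne', one_mul]
  exact hswap

theorem tricomiU_one_half_pos {a y : ℝ} (ha : 0 < a) (hy : 0 < y) :
    0 < tricomiU a (1 / 2) (y ^ 2) := by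
  have hΓ := Real.Gamma_pos_of_pos ha
  have hG := mul_pos (Real.sqrt_pos.2 Real.pi_pos) (gaussLaplace_pos ha y)
  rw [sqrt_pi_mul_gaussLaplace ha hy] at hG
  exact pos_of_mul_pos_right (pos_of_mul_pos_right hG (by positivity)) hΓ.le

theorem tricomiU_one_half {a y : ℝ} (ha : 0 < a) (hy : 0 < y) :
    tricomiU a (1 / 2) (y ^ 2)
      = √Real.pi / Real.Gamma (a + 1 / 2) * kummerM a (1 / 2) (y ^ 2)
        - 2 * √Real.pi / Real.Gamma a * y * kummerM (a + 1 / 2) (3 / 2) (y ^ 2) := by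
  have hΓ' := (Real.Gamma_pos_of_pos (show 0 < a + 1 / 2 by positivity)).ne'
  have hU := sqrt_pi_mul_gaussLaplace ha hy
  have hM := two_mul_gaussLaplace ha y
  generalize kummerM (a + 1 / 2) (3 / 2) (y ^ 2) = m at *
  generalize Real.Gamma (a + 1 / 2) = g at *
  field_simp
  linear_combination √Real.pi * hM - 2 * hU

end TricomiFunction

section SimilarityProfiles

open Filter Topology

/-- The even similarity profile: `t ^ (α / 2) * evenProfile α (x / (2 * √(d * t)))` solves the heat
equation with diffusivity `d`. -/
noncomputable def evenProfile (α η : ℝ) : ℝ := kummerM (-α / 2) (1 / 2) (-η ^ 2)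

/-- The odd similarity profile: `t ^ (α / 2) * oddProfile α (x / (2 * √(d * t)))` solves the heat
equation with diffusivity `d`. -/
noncomputable def oddProfile (α η : ℝ) : ℝ := η * kummerM (-α / 2 + 1 / 2) (3 / 2) (-η ^ 2)

theorem evenProfile_zero (α : ℝ) : evenProfile α 0 = 1 := by simp [evenProfile, kummerM_zero]

theorem oddProfile_zero (α : ℝ) : oddProfile α 0 = 0 := by simp [oddProfile]

theorem one_half_add_natCast_ne_zero (n : ℕ) : (1 / 2 : ℝ) + n ≠ 0 := by positivity

theorem three_halves_add_natCast_ne_zero (n : ℕ) : (3 / 2 : ℝ) + n ≠ 0 := by positivity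

theorem exp_sq_mul_evenProfile (α η : ℝ) :
    Real.exp (η ^ 2) * evenProfile α η = kummerM (α / 2 + 1 / 2) (1 / 2) (η ^ 2) := by
  rw [evenProfile, exp_mul_kummerM_neg _ one_half_add_natCast_ne_zero]
  ring_nf

theorem exp_sq_mul_oddProfile (α η : ℝ) :
    Real.exp (η ^ 2) * oddProfile α η = η * kummerM (α / 2 + 1) (3 / 2) (η ^ 2) := by
  rw [oddProfile, mul_left_comm, exp_mul_kummerM_neg _ three_halves_add_natCast_ne_zero]
  ring_nf

theorem evenProfile_pos {α : ℝ} (hα : -1 < α) (η : ℝ) : 0 < evenProfile α η := by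
  refine pos_of_mul_pos_right ?_ (Real.exp_pos (η ^ 2)).le
  rw [exp_sq_mul_evenProfile]
  exact kummerM_pos (by linarith) one_half_pos (sq_nonneg η)

theorem oddProfile_nonneg {α η : ℝ} (hα : -2 < α) (hη : 0 ≤ η) : 0 ≤ oddProfile α η := by
  refine nonneg_of_mul_nonneg_right ?_ (Real.exp_pos (η ^ 2))
  rw [exp_sq_mul_oddProfile]
  exact mul_nonneg hη (kummerM_pos (by linarith) (by norm_num) (sq_nonneg η)).le

theorem evenProfile_sub_two (α η : ℝ) :
    evenProfile (α - 2) η = evenProfile α η - 2 * η * oddProfile (α - 1) η := by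
  have h := kummerM_add_one_left (-α / 2) (1 / 2) (-η ^ 2)
  rw [show (1 / 2 : ℝ) + 1 = 3 / 2 by norm_num] at h
  rw [evenProfile, evenProfile, oddProfile, show -(α - 2) / 2 = -α / 2 + 1 by ring,
    show -(α - 1) / 2 + 1 / 2 = -α / 2 + 1 by ring, h]
  ring

theorem kummerM_one_half_eq (a z : ℝ) :
    kummerM a (1 / 2) z = kummerM a (3 / 2) z + 4 / 3 * a * z * kummerM (a + 1) (5 / 2) z := by
  have h := mul_kummerM_eq_add_deriv a one_half_add_natCast_ne_zero z
  norm_num at h ⊢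
  linear_combination 2 * h

theorem sub_one_mul_oddProfile_sub_two (α η : ℝ) :
    (α - 1) * oddProfile (α - 2) η = α * oddProfile α η - η * evenProfile (α - 1) η := by
  have h := kummerM_add_one_left (-α / 2 + 1 / 2) (3 / 2) (-η ^ 2)
  rw [show (3 / 2 : ℝ) + 1 = 5 / 2 by norm_num] at h
  rw [oddProfile, oddProfile, evenProfile, show -(α - 1) / 2 = -α / 2 + 1 / 2 by ring,
    show -(α - 2) / 2 + 1 / 2 = -α / 2 + 1 / 2 + 1 by ring, h, kummerM_one_half_eq]
  ring

theorem hasDerivAt_kummerM_neg_sq (a b η : ℝ) :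
    HasDerivAt (fun η => kummerM a b (-η ^ 2))
      (-(2 * η) * (a / b * kummerM (a + 1) (b + 1) (-η ^ 2))) η := by
  refine ((hasDerivAt_kummerM a b _).comp η (hasDerivAt_pow 2 η).fun_neg).congr_deriv ?_
  simp only [Nat.cast_ofNat, Nat.add_one_sub_one, pow_one]
  ring

theorem hasDerivAt_evenProfile (α η : ℝ) :
    HasDerivAt (evenProfile α) (2 * α * oddProfile (α - 1) η) η := by
  refine (hasDerivAt_kummerM_neg_sq (-α / 2) (1 / 2) η).congr_deriv ?_
  rw [oddProfile, show -(α - 1) / 2 + 1 / 2 = -α / 2 + 1 by ring,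
    show (1 / 2 : ℝ) + 1 = 3 / 2 by norm_num]
  ring

theorem hasDerivAt_oddProfile (α η : ℝ) :
    HasDerivAt (oddProfile α) (evenProfile (α - 1) η) η := by
  refine ((hasDerivAt_id η).mul
    (hasDerivAt_kummerM_neg_sq (-α / 2 + 1 / 2) (3 / 2) η)).congr_deriv ?_
  rw [evenProfile, show -(α - 1) / 2 = -α / 2 + 1 / 2 by ring, kummerM_one_half_eq,
    show (3 / 2 : ℝ) + 1 = 5 / 2 by norm_num]
  simp only [id]
  ring

/-- The Wronskian of `evenProfile α` and `oddProfile α`. -/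
noncomputable def profileWronskian (α η : ℝ) : ℝ :=
  evenProfile α η * evenProfile (α - 1) η - 2 * α * oddProfile (α - 1) η * oddProfile α η

theorem hasDerivAt_profileWronskian (α η : ℝ) :
    HasDerivAt (profileWronskian α) (-(2 * η) * profileWronskian α η) η := by
  have hfst := (hasDerivAt_evenProfile α η).mul (hasDerivAt_evenProfile (α - 1) η)
  have hsnd := ((hasDerivAt_oddProfile (α - 1) η).const_mul (2 * α)).mul (hasDerivAt_oddProfile α η)
  refine (hfst.sub hsnd).congr_deriv ?_
  rw [show α - 1 - 1 = α - 2 by ring, evenProfile_sub_two, profileWronskian]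
  linear_combination 2 * evenProfile α η * sub_one_mul_oddProfile_sub_two α η

theorem profileWronskian_eq_exp (α η : ℝ) : profileWronskian α η = Real.exp (-η ^ 2) := by
  have hderiv (η : ℝ) :
      HasDerivAt (fun η => Real.exp (η ^ 2) * profileWronskian α η) 0 η := by
    refine (((hasDerivAt_pow 2 η).exp).mul (hasDerivAt_profileWronskian α η)).congr_deriv ?_
    simp
    ring
  have hconst := is_const_of_deriv_eq_zero (fun η => (hderiv η).differentiableAt)
    (fun η => (hderiv η).deriv) η 0
  rw [Real.exp_neg, ← one_div, eq_div_iff (Real.exp_pos _).ne', mul_comm, hconst]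
  simp [profileWronskian, evenProfile_zero, oddProfile_zero]

theorem Gamma_mul_evenProfile {α : ℝ} (hα : -1 < α) (η : ℝ) :
    Real.Gamma (α / 2 + 1 / 2) * evenProfile α η
      = Real.exp (-η ^ 2) * gaussLaplace (α / 2 + 1 / 2) (-η)
        + Real.exp (-η ^ 2) * gaussLaplace (α / 2 + 1 / 2) η := by
  have hplus := two_mul_gaussLaplace (show 0 < α / 2 + 1 / 2 by linarith) η
  have hminus := two_mul_gaussLaplace (show 0 < α / 2 + 1 / 2 by linarith) (-η)
  rw [neg_sq] at hminus
  rw [← mul_add, Real.exp_neg, eq_inv_mul_iff_mul_eq₀ (Real.exp_pos _).ne', mul_left_comm,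
    exp_sq_mul_evenProfile]
  linear_combination -hplus / 2 - hminus / 2

theorem two_mul_Gamma_mul_oddProfile {α : ℝ} (hα : -1 < α) (η : ℝ) :
    2 * Real.Gamma (α / 2 + 1) * oddProfile α η
      = Real.exp (-η ^ 2) * gaussLaplace (α / 2 + 1 / 2) (-η)
        - Real.exp (-η ^ 2) * gaussLaplace (α / 2 + 1 / 2) η := by
  have hplus := two_mul_gaussLaplace (show 0 < α / 2 + 1 / 2 by linarith) η
  have hminus := two_mul_gaussLaplace (show 0 < α / 2 + 1 / 2 by linarith) (-η)
  rw [show α / 2 + 1 / 2 + 1 / 2 = α / 2 + 1 by ring] at hplus hminus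
  rw [neg_sq] at hminus
  rw [← mul_sub, Real.exp_neg, eq_inv_mul_iff_mul_eq₀ (Real.exp_pos _).ne', mul_left_comm,
    exp_sq_mul_oddProfile]
  linear_combination hplus / 2 - hminus / 2

theorem tendsto_evenProfile_div_rpow {α : ℝ} (hα : 0 ≤ α) :
    Tendsto (fun η => evenProfile α η / η ^ α) atTop
      (𝓝 (√Real.pi / Real.Gamma (α / 2 + 1 / 2))) := by
  have ha : 1 / 2 ≤ α / 2 + 1 / 2 := by linarith
  have hΓ := (Real.Gamma_pos_of_pos (show 0 < α / 2 + 1 / 2 by positivity)).ne'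
  have hlim := ((tendsto_exp_neg_sq_mul_gaussLaplace_neg_div ha).add
    (tendsto_exp_neg_sq_mul_gaussLaplace_div ha)).div_const (Real.Gamma (α / 2 + 1 / 2))
  rw [add_zero] at hlim
  refine hlim.congr fun η => ?_
  rw [← add_div, ← Gamma_mul_evenProfile (by linarith),
    show 2 * (α / 2 + 1 / 2) - 1 = α by ring, div_right_comm, mul_div_cancel_left₀ _ hΓ]

theorem tendsto_oddProfile_div_rpow {α : ℝ} (hα : 0 ≤ α) :
    Tendsto (fun η => oddProfile α η / η ^ α) atTop
      (𝓝 (√Real.pi / (2 * Real.Gamma (α / 2 + 1)))) := by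
  have ha : 1 / 2 ≤ α / 2 + 1 / 2 := by linarith
  have hΓ := (mul_pos two_pos (Real.Gamma_pos_of_pos (show 0 < α / 2 + 1 by positivity))).ne'
  have hlim := ((tendsto_exp_neg_sq_mul_gaussLaplace_neg_div ha).sub
    (tendsto_exp_neg_sq_mul_gaussLaplace_div ha)).div_const (2 * Real.Gamma (α / 2 + 1))
  rw [sub_zero] at hlim
  refine hlim.congr fun η => ?_
  rw [← sub_div, ← two_mul_Gamma_mul_oddProfile (by linarith),
    show 2 * (α / 2 + 1 / 2) - 1 = α by ring, div_right_comm, mul_div_cancel_left₀ _ hΓ]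

end SimilarityProfiles

section SimilaritySolutions

open Filter Topology

/-- The self-similar solution of the heat equation with diffusivity `d`, homogeneous of degree `α`
in `(x, √t)`, whose even and odd profiles have the coefficients `E` and `F`. -/
noncomputable def similaritySolution (α d E F x t : ℝ) : ℝ :=
  t ^ (α / 2) * (E * evenProfile α (x / (2 * √(d * t))) + F * oddProfile α (x / (2 * √(d * t))))

theorem similaritySolution_zero_left (α d E F t : ℝ) :
    similaritySolution α d E F 0 t = t ^ (α / 2) * E := by
  simp [similaritySolution, evenProfile_zero, oddProfile_zero]

theorem rpow_half_eq_mul_sqrt (α : ℝ) {t : ℝ} (ht : 0 < t) :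
    t ^ (α / 2) = t ^ ((α - 1) / 2) * √t := by
  rw [Real.sqrt_eq_rpow, ← Real.rpow_add ht]
  ring_nf

theorem hasDerivAt_similarityProfile (α E F η : ℝ) :
    HasDerivAt (fun η => E * evenProfile α η + F * oddProfile α η)
      (F * evenProfile (α - 1) η + 2 * α * E * oddProfile (α - 1) η) η :=
  (((hasDerivAt_evenProfile α η).const_mul E).add
    ((hasDerivAt_oddProfile α η).const_mul F)).congr_deriv (by ring)

theorem hasDerivAt_similaritySolution_space (α E F x : ℝ) {d t : ℝ} (hd : 0 < d) (ht : 0 < t) :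
    HasDerivAt (fun x => similaritySolution α d E F x t)
      (similaritySolution (α - 1) d F (2 * α * E) x t / (2 * √d)) x := by
  have hη := (hasDerivAt_id x).div_const (2 * √(d * t))
  refine (((hasDerivAt_similarityProfile α E F _).comp x hη).const_mul
    (t ^ (α / 2))).congr_deriv ?_
  rw [similaritySolution, rpow_half_eq_mul_sqrt α ht, Real.sqrt_mul hd.le]
  simp only [id]
  field_simp

theorem hasDerivAt_similarityVariable_time (x : ℝ) {d t : ℝ} (hd : 0 < d) (ht : 0 < t) :
    HasDerivAt (fun t => x / (2 * √(d * t))) (-(x / (2 * √(d * t)) / (2 * t))) t := by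
  have hroot : 0 < √(d * t) := Real.sqrt_pos.2 (mul_pos hd ht)
  have hsqrt := (((hasDerivAt_id t).const_mul d).sqrt (mul_pos hd ht).ne').const_mul 2
  refine ((hasDerivAt_const t x).div hsqrt (by simpa using hroot.ne')).congr_deriv ?_
  have hsq : √(d * t) ^ 2 = d * t := Real.sq_sqrt (mul_pos hd ht).le
  simp only [id]
  field_simp
  linear_combination x * hsq

theorem hasDerivAt_similaritySolution_time (α E F x : ℝ) {d t : ℝ} (hd : 0 < d) (ht : 0 < t) :
    HasDerivAt (fun t => similaritySolution α d E F x t)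
      (similaritySolution (α - 2) d (2 * α * E) (2 * (α - 1) * F) x t / 4) t := by
  have hη := hasDerivAt_similarityVariable_time x hd ht
  refine ((Real.hasDerivAt_rpow_const (p := α / 2) (.inl ht.ne')).mul
    ((hasDerivAt_similarityProfile α E F _).comp t hη)).congr_deriv ?_
  have hpow : t ^ ((α - 2) / 2) = t ^ (α / 2) / t := by rw [← Real.rpow_sub_one ht.ne']; ring_nf
  simp only [similaritySolution, Function.comp_apply, hpow, Real.rpow_sub_one ht.ne']
  generalize x / (2 * √(d * t)) = η
  rw [evenProfile_sub_two]
  field_simp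
  linear_combination -4 * F * sub_one_mul_oddProfile_sub_two α η

theorem deriv_similaritySolution_space (α E F x : ℝ) {d t : ℝ} (hd : 0 < d) (ht : 0 < t) :
    deriv (fun x => similaritySolution α d E F x t) x
      = similaritySolution (α - 1) d F (2 * α * E) x t / (2 * √d) :=
  (hasDerivAt_similaritySolution_space α E F x hd ht).deriv

theorem similaritySolution_heat_equation (α E F x : ℝ) {d t : ℝ} (hd : 0 < d) (ht : 0 < t) :
    deriv (fun t => similaritySolution α d E F x t) t
      = d * deriv (deriv fun x => similaritySolution α d E F x t) x := by
  have hspace : (deriv fun x => similaritySolution α d E F x t)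
      = fun x => similaritySolution (α - 1) d F (2 * α * E) x t / (2 * √d) :=
    funext fun x => deriv_similaritySolution_space α E F x hd ht
  rw [hspace, ((hasDerivAt_similaritySolution_space _ _ _ x hd ht).div_const _).deriv,
    (hasDerivAt_similaritySolution_time α E F x hd ht).deriv, show α - 1 - 1 = α - 2 by ring,
    div_div, mul_mul_mul_comm, Real.mul_self_sqrt hd.le]
  generalize similaritySolution (α - 2) d _ _ x t = u
  field_simp
  norm_num

theorem tendsto_similarityVariable_nhdsGT_zero {d x : ℝ} (hd : 0 < d) (hx : 0 < x) :
    Tendsto (fun t => x / (2 * √(d * t))) (𝓝[>] 0) atTop := by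
  have hlim := (tendsto_inv_nhdsGT_zero.comp tendsto_sqrt_nhdsGT_zero).const_mul_atTop
    (show 0 < x / (2 * √d) by positivity)
  refine hlim.congr fun t => ?_
  rw [Function.comp_apply, Real.sqrt_mul hd.le, ← div_eq_mul_inv, div_div, mul_assoc]

theorem rpow_half_eq_div_similarityVariable_rpow (α : ℝ) {d x t : ℝ} (hd : 0 < d) (hx : 0 < x)
    (ht : 0 < t) :
    t ^ (α / 2) = x ^ α / (2 ^ α * d ^ (α / 2)) / (x / (2 * √(d * t))) ^ α := by
  have hroot : √(d * t) ^ α = d ^ (α / 2) * t ^ (α / 2) := by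
    rw [Real.sqrt_eq_rpow, ← Real.rpow_mul (by positivity), ← Real.mul_rpow hd.le ht.le]
    ring_nf
  rw [Real.div_rpow hx.le (by positivity), Real.mul_rpow zero_le_two (by positivity), hroot]
  field_simp

theorem tendsto_similaritySolution_nhdsGT_zero {α d x : ℝ} (hα : 0 ≤ α) (hd : 0 < d) (hx : 0 < x)
    (E F : ℝ) :
    Tendsto (similaritySolution α d E F x) (𝓝[>] 0)
      (𝓝 (x ^ α / (2 ^ α * d ^ (α / 2)) * (E * (√Real.pi / Real.Gamma (α / 2 + 1 / 2))
        + F * (√Real.pi / (2 * Real.Gamma (α / 2 + 1)))))) := by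
  have hη := tendsto_similarityVariable_nhdsGT_zero hd hx
  refine (((((tendsto_evenProfile_div_rpow hα).comp hη).const_mul E).add
    (((tendsto_oddProfile_div_rpow hα).comp hη).const_mul F)).const_mul _).congr' ?_
  filter_upwards [self_mem_nhdsWithin] with t ht
  rw [similaritySolution, rpow_half_eq_div_similarityVariable_rpow α hd hx ht]
  simp only [Function.comp_apply]
  ring

section VanishingProfile

variable {α z E F : ℝ} (hz : E * evenProfile α z + F * oddProfile α z = 0)

include hz

theorem similaritySolution_eq_zero {d x t : ℝ} (hx : x / (2 * √(d * t)) = z) :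
    similaritySolution α d E F x t = 0 := by
  rw [similaritySolution, hx, hz, mul_zero]

theorem profile_flux_of_profile_eq_zero (hα : -1 < α) :
    F * evenProfile (α - 1) z + 2 * α * E * oddProfile (α - 1) z
      = F / kummerM (α / 2 + 1 / 2) (1 / 2) (z ^ 2) := by
  have heven := (evenProfile_pos hα z).ne'
  have hW := profileWronskian_eq_exp α z
  rw [profileWronskian, Real.exp_neg, ← mul_eq_one_iff_eq_inv₀ (Real.exp_pos _).ne'] at hW
  rw [← exp_sq_mul_evenProfile, eq_div_iff (mul_ne_zero (Real.exp_pos _).ne' heven)]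
  linear_combination F * hW + 2 * α * oddProfile (α - 1) z * Real.exp (z ^ 2) * hz

theorem deriv_similaritySolution_of_profile_eq_zero (hα : -1 < α) {d x t : ℝ} (hd : 0 < d)
    (ht : 0 < t) (hx : x / (2 * √(d * t)) = z) :
    deriv (fun x => similaritySolution α d E F x t) x
      = t ^ ((α - 1) / 2) / (2 * √d) * (F / kummerM (α / 2 + 1 / 2) (1 / 2) (z ^ 2)) := by
  rw [deriv_similaritySolution_space α E F x hd ht, similaritySolution, hx,
    profile_flux_of_profile_eq_zero hz hα]
  ring

theorem profile_farField_of_profile_eq_zero (hα : -1 < α) (hz₀ : 0 < z) :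
    E * (√Real.pi / Real.Gamma (α / 2 + 1 / 2)) + F * (√Real.pi / (2 * Real.Gamma (α / 2 + 1)))
      = F * tricomiU (α / 2 + 1 / 2) (1 / 2) (z ^ 2)
        / (2 * kummerM (α / 2 + 1 / 2) (1 / 2) (z ^ 2)) := by
  have heven := (evenProfile_pos hα z).ne'
  have hE : E = -(F * oddProfile α z) / evenProfile α z := by
    rw [eq_div_iff heven]
    linear_combination hz
  rw [tricomiU_one_half (by linarith) hz₀, mul_assoc (2 * √Real.pi / _), add_assoc _ (1 / 2),
    add_halves, ← exp_sq_mul_oddProfile, ← exp_sq_mul_evenProfile, hE]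
  field_simp
  ring

theorem tendsto_similaritySolution_of_profile_eq_zero (hα : 0 ≤ α) (hz₀ : 0 < z) {d x : ℝ}
    (hd : 0 < d) (hx : 0 < x) :
    Tendsto (similaritySolution α d E F x) (𝓝[>] 0)
      (𝓝 (x ^ α / (2 ^ α * d ^ (α / 2)) * (F * tricomiU (α / 2 + 1 / 2) (1 / 2) (z ^ 2)
        / (2 * kummerM (α / 2 + 1 / 2) (1 / 2) (z ^ 2))))) := by
  rw [← profile_farField_of_profile_eq_zero hz (by linarith) hz₀]
  exact tendsto_similaritySolution_nhdsGT_zero hα hd hx E F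

end VanishingProfile

end SimilaritySolutions

section StefanProblem

open Filter Topology

/-- The free boundary `x = 2 ν √(d t)` between the two phases, for liquid diffusivity `d`. -/
noncomputable def freeBoundary (ν d t : ℝ) : ℝ := 2 * ν * √(d * t)

theorem freeBoundary_div_liquid (ν : ℝ) {d t : ℝ} (hd : 0 < d) (ht : 0 < t) :
    freeBoundary ν d t / (2 * √(d * t)) = ν := by
  rw [freeBoundary]
  field_simp

theorem freeBoundary_div_solid (ν d : ℝ) {d' t : ℝ} (hd' : 0 < d') (ht : 0 < t) :
    freeBoundary ν d t / (2 * √(d' * t)) = ν * √(d / d') := by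
  rw [freeBoundary, Real.sqrt_div' d hd'.le, Real.sqrt_mul' d ht.le, Real.sqrt_mul hd'.le]
  field_simp

theorem freeBoundary_rpow_mul_deriv (α : ℝ) {ν d t : ℝ} (hν : 0 < ν) (hd : 0 < d) (ht : 0 < t) :
    freeBoundary ν d t ^ α * deriv (freeBoundary ν d) t
      = 2 ^ α * d ^ ((α + 1) / 2) * ν ^ (α + 1) * t ^ ((α - 1) / 2) := by
  have hderiv : HasDerivAt (freeBoundary ν d) (ν * √d / √t) t := by
    have h := (((Real.hasDerivAt_sqrt ht.ne').const_mul √d).const_mul (2 * ν)).congr_deriv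
      (show 2 * ν * (√d * (1 / (2 * √t))) = ν * √d / √t by ring)
    exact h.congr_of_eventuallyEq (.of_forall fun t => by
      simp only [freeBoundary, Real.sqrt_mul hd.le])
  have hroot : √(d * t) ^ α = d ^ (α / 2) * t ^ (α / 2) := by
    rw [← Real.mul_rpow hd.le ht.le, Real.sqrt_eq_rpow, ← Real.rpow_mul (by positivity)]
    ring_nf
  have hpow : d ^ ((α + 1) / 2) = d ^ (α / 2) * √d := by
    rw [rpow_half_eq_mul_sqrt (α + 1) hd, add_sub_cancel_right]
  rw [hderiv.deriv, freeBoundary, Real.mul_rpow (by positivity) (by positivity),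
    Real.mul_rpow zero_le_two hν.le, hroot, rpow_half_eq_mul_sqrt α ht, hpow,
    Real.rpow_add_one hν.ne']
  field_simp

variable {α z d k h T E F : ℝ}

theorem profile_eq_zero_of_coefficient_eq (hα : -1 < α)
    (hE : E = -oddProfile α z * F / evenProfile α z) :
    E * evenProfile α z + F * oddProfile α z = 0 := by
  rw [hE, div_mul_cancel₀ _ (evenProfile_pos hα z).ne']
  ring

theorem mul_eq_of_convective_coefficients (hα : -1 < α) (hz : 0 ≤ z) (hk : 0 < k) (hh : 0 ≤ h)
    (hzero : E * evenProfile α z + F * oddProfile α z = 0)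
    (hF : F = -(2 * h * T * √d * evenProfile α z) /
      (k * evenProfile α z + 2 * √d * h * oddProfile α z)) :
    k * F = 2 * √d * h * (E - T) := by
  have heven := evenProfile_pos hα z
  have hodd := oddProfile_nonneg (show -2 < α by linarith) hz
  rw [eq_div_iff (by positivity)] at hF
  refine mul_right_cancel₀ heven.ne' ?_
  linear_combination hF - 2 * √d * h * hzero

theorem convective_boundary_condition {t : ℝ} (hd : 0 < d) (ht : 0 < t)
    (hF : k * F = 2 * √d * h * (E - T)) :
    k * deriv (fun x => similaritySolution α d E F x t) 0
      = h * t ^ (-(1 : ℝ) / 2) * (similaritySolution α d E F 0 t - T * t ^ (α / 2)) := by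
  have hpow : t ^ ((α - 1) / 2) = t ^ (-(1 : ℝ) / 2) * t ^ (α / 2) := by
    rw [← Real.rpow_add ht]
    ring_nf
  rw [deriv_similaritySolution_space α E F 0 hd ht, similaritySolution_zero_left,
    similaritySolution_zero_left, hpow]
  field_simp
  linear_combination hF

theorem mul_div_kummerM_of_convective_coefficients (hα : -1 < α) (hk : k ≠ 0)
    (hF : F = -(2 * h * T * √d * evenProfile α z) /
      (k * evenProfile α z + 2 * √d * h * oddProfile α z)) :
    k * (F / kummerM (α / 2 + 1 / 2) (1 / 2) (z ^ 2))
      = -(2 * h * T * √d) * (1 / (kummerM (α / 2 + 1 / 2) (1 / 2) (z ^ 2)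
          + 2 * √d * h / k * z * kummerM (α / 2 + 1) (3 / 2) (z ^ 2))) := by
  have heven := (evenProfile_pos hα z).ne'
  rw [mul_assoc _ z, ← exp_sq_mul_evenProfile, ← exp_sq_mul_oddProfile, hF,
    show Real.exp (z ^ 2) * evenProfile α z
        + 2 * √d * h / k * (Real.exp (z ^ 2) * oddProfile α z)
      = Real.exp (z ^ 2) / k * (k * evenProfile α z + 2 * √d * h * oddProfile α z) by
      field_simp]
  field_simp

theorem stefan_condition {ks kl ds dl γ Ti Tinf h₀ ν t zs El Fl Es Fs U D : ℝ} (hα : -1 < α)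
    (hds : 0 < ds) (hdl : 0 < dl) (hγ : γ ≠ 0) (hν : 0 < ν) (ht : 0 < t)
    (hzs : freeBoundary ν dl t / (2 * √(ds * t)) = zs)
    (hl : El * evenProfile α ν + Fl * oddProfile α ν = 0)
    (hs : Es * evenProfile α zs + Fs * oddProfile α zs = 0)
    (hFl : kl * (Fl / kummerM (α / 2 + 1 / 2) (1 / 2) (ν ^ 2))
      = -(2 * h₀ * Tinf * √dl) * (1 / D))
    (hFs : Fs = -Ti * 2 ^ (α + 1) * ds ^ (α / 2) * kummerM (α / 2 + 1 / 2) (1 / 2) (zs ^ 2) / U)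
    (hν_eq : -(ks * Ti * ds ^ ((α - 1) / 2) / (γ * dl ^ ((α + 1) / 2))) * (1 / U)
      + h₀ * Tinf / (γ * 2 ^ α * dl ^ ((α + 1) / 2)) * (1 / D) = ν ^ (α + 1)) :
    ks * deriv (fun x => similaritySolution α ds Es Fs x t) (freeBoundary ν dl t)
        - kl * deriv (fun x => similaritySolution α dl El Fl x t) (freeBoundary ν dl t)
      = γ * freeBoundary ν dl t ^ α * deriv (freeBoundary ν dl) t := by
  have hM : kummerM (α / 2 + 1 / 2) (1 / 2) (zs ^ 2) ≠ 0 :=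
    (kummerM_pos (by linarith) one_half_pos (sq_nonneg zs)).ne'
  have hFs' : Fs / kummerM (α / 2 + 1 / 2) (1 / 2) (zs ^ 2)
      = -(2 * √ds) * (Ti * 2 ^ α * ds ^ ((α - 1) / 2) * (1 / U)) := by
    rw [hFs, Real.rpow_add_one two_ne_zero, rpow_half_eq_mul_sqrt α hds]
    generalize kummerM _ _ _ = m at hM ⊢
    field_simp
  rw [deriv_similaritySolution_of_profile_eq_zero hs hα hds ht hzs, hFs',
    deriv_similaritySolution_of_profile_eq_zero hl hα hdl ht (freeBoundary_div_liquid ν hdl ht),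
    mul_left_comm kl, hFl, mul_assoc γ, freeBoundary_rpow_mul_deriv α hν hdl ht, ← hν_eq]
  field_simp
  ring

theorem initial_temperature {x : ℝ} (hα : 0 ≤ α) (hz : 0 < z) (hd : 0 < d) (hx : 0 < x)
    (hzero : E * evenProfile α z + F * oddProfile α z = 0)
    (hF : F = -T * 2 ^ (α + 1) * d ^ (α / 2) * kummerM (α / 2 + 1 / 2) (1 / 2) (z ^ 2)
      / tricomiU (α / 2 + 1 / 2) (1 / 2) (z ^ 2)) :
    Tendsto (similaritySolution α d E F x) (𝓝[>] 0) (𝓝 (-T * x ^ α)) := by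
  have hM := kummerM_pos (show 0 < α / 2 + 1 / 2 by linarith) one_half_pos (sq_nonneg z)
  have hU := tricomiU_one_half_pos (show 0 < α / 2 + 1 / 2 by linarith) hz
  convert! tendsto_similaritySolution_of_profile_eq_zero hzero hα hz hd hx using 2
  rw [hF, Real.rpow_add_one two_ne_zero]
  generalize kummerM _ _ _ = m at hM ⊢
  generalize tricomiU _ _ _ = u at hU ⊢
  field_simp

end StefanProblem

theorem statement_17_general (α kl ks dl ds γ Ti Tinf h₀ : ℝ)
    (hα : 0 ≤ α) (hkl : 0 < kl) (hdl : 0 < dl) (hds : 0 < ds) (hγ : γ ≠ 0) (hh₀ : 0 ≤ h₀)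
    (ω : ℝ) (hω : ω = Real.sqrt (dl / ds))
    (ν : ℝ) (hνpos : 0 < ν)
    (hνeq :
      -(ks * Ti * ds ^ ((α - 1) / 2) / (γ * dl ^ ((α + 1) / 2))) *
          (1 / tricomiU (α / 2 + 1 / 2) (1 / 2) (ν ^ 2 * ω ^ 2))
        + h₀ * Tinf / (γ * (2 : ℝ) ^ α * dl ^ ((α + 1) / 2)) *
          (1 / (kummerM (α / 2 + 1 / 2) (1 / 2) (ν ^ 2)
                + 2 * Real.sqrt dl * h₀ / kl * ν * kummerM (α / 2 + 1) (3 / 2) (ν ^ 2)))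
        = ν ^ (α + 1))
    (s : ℝ → ℝ) (hs : ∀ t : ℝ, s t = 2 * ν * Real.sqrt (dl * t))
    (Fl El Fs Es : ℝ)
    (hFl : Fl = -(2 * h₀ * Tinf * Real.sqrt dl * kummerM (-α / 2) (1 / 2) (-ν ^ 2)) /
      (kl * kummerM (-α / 2) (1 / 2) (-ν ^ 2)
        + 2 * Real.sqrt dl * h₀ * ν * kummerM (-α / 2 + 1 / 2) (3 / 2) (-ν ^ 2)))
    (hEl : El = -ν * kummerM (-α / 2 + 1 / 2) (3 / 2) (-ν ^ 2) * Fl /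
      kummerM (-α / 2) (1 / 2) (-ν ^ 2))
    (hFs : Fs = -Ti * (2 : ℝ) ^ (α + 1) * ds ^ (α / 2) *
      kummerM (α / 2 + 1 / 2) (1 / 2) (ν ^ 2 * ω ^ 2) /
        tricomiU (α / 2 + 1 / 2) (1 / 2) (ν ^ 2 * ω ^ 2))
    (hEs : Es = -ν * ω * kummerM (-α / 2 + 1 / 2) (3 / 2) (-(ν ^ 2 * ω ^ 2)) * Fs /
      kummerM (-α / 2) (1 / 2) (-(ν ^ 2 * ω ^ 2)))
    (Ψl Ψs : ℝ → ℝ → ℝ)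
    (hΨl : ∀ x t : ℝ, Ψl x t =
      t ^ (α / 2) *
        (El * kummerM (-α / 2) (1 / 2) (-(x / (2 * Real.sqrt (dl * t))) ^ 2)
          + Fl * (x / (2 * Real.sqrt (dl * t))) *
              kummerM (-α / 2 + 1 / 2) (3 / 2) (-(x / (2 * Real.sqrt (dl * t))) ^ 2)))
    (hΨs : ∀ x t : ℝ, Ψs x t =
      t ^ (α / 2) *
        (Es * kummerM (-α / 2) (1 / 2) (-(x / (2 * Real.sqrt (ds * t))) ^ 2)
          + Fs * (x / (2 * Real.sqrt (ds * t))) *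
              kummerM (-α / 2 + 1 / 2) (3 / 2) (-(x / (2 * Real.sqrt (ds * t))) ^ 2))) :
    (∀ t : ℝ, 0 < t → ∀ x : ℝ,
        deriv (fun τ => Ψl x τ) t = dl * deriv (deriv (fun y => Ψl y t)) x) ∧
    (∀ t : ℝ, 0 < t → ∀ x : ℝ,
        deriv (fun τ => Ψs x τ) t = ds * deriv (deriv (fun y => Ψs y t)) x) ∧
    (∀ t : ℝ, 0 < t → Ψl (s t) t = 0 ∧ Ψs (s t) t = 0) ∧
    (∀ t : ℝ, 0 < t →
        ks * deriv (fun y => Ψs y t) (s t) - kl * deriv (fun y => Ψl y t) (s t)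
          = γ * (s t) ^ α * deriv s t) ∧
    (∀ t : ℝ, 0 < t →
        kl * deriv (fun y => Ψl y t) 0
          = h₀ * t ^ (-(1 : ℝ) / 2) * (Ψl 0 t - Tinf * t ^ (α / 2))) ∧
    (∀ x : ℝ, 0 < x →
        Filter.Tendsto (fun t : ℝ => Ψs x t) (nhdsWithin 0 (Set.Ioi 0))
          (nhds (-Ti * x ^ α))) := by
  have hα' : -1 < α := by linarith
  have hz : 0 < ν * ω := hω ▸ mul_pos hνpos (Real.sqrt_pos.2 (div_pos hdl hds))
  obtain rfl : s = freeBoundary ν dl := funext hs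
  obtain rfl : Ψl = similaritySolution α dl El Fl := by
    ext x t
    rw [hΨl, similaritySolution, evenProfile, oddProfile, mul_assoc Fl]
  obtain rfl : Ψs = similaritySolution α ds Es Fs := by
    ext x t
    rw [hΨs, similaritySolution, evenProfile, oddProfile, mul_assoc Fs]
  rw [← mul_pow] at hνeq hFs hEs
  rw [mul_assoc _ ν] at hFl
  have hl := profile_eq_zero_of_coefficient_eq (α := α) (z := ν) (E := El) (F := Fl) hα'
    (by rw [hEl, evenProfile, oddProfile, neg_mul])
  have hs' := profile_eq_zero_of_coefficient_eq (α := α) (z := ν * ω) (E := Es) (F := Fs) hα'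
    (by rw [hEs, evenProfile, oddProfile, neg_mul, neg_mul])
  have hηl (t : ℝ) (ht : 0 < t) := freeBoundary_div_liquid ν hdl ht
  have hηs (t : ℝ) (ht : 0 < t) := hω ▸ freeBoundary_div_solid ν dl hds ht
  exact ⟨fun t ht x => similaritySolution_heat_equation α El Fl x hdl ht,
    fun t ht x => similaritySolution_heat_equation α Es Fs x hds ht,
    fun t ht => ⟨similaritySolution_eq_zero hl (hηl t ht),
      similaritySolution_eq_zero hs' (hηs t ht)⟩,
    fun t ht => stefan_condition hα' hds hdl hγ hνpos ht (hηs t ht) hl hs'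
      (mul_div_kummerM_of_convective_coefficients hα' hkl.ne' hFl) hFs hνeq,
    fun t ht => convective_boundary_condition hdl ht
      (mul_eq_of_convective_coefficients hα' hνpos.le hkl hh₀ hl hFl),
    fun x hx => initial_temperature hα hz hds hx hs' hFs⟩

/-- main theorem. Under the restriction
`h₀ > 2^α Γ(α/2+1) k_s T_i d_s^{(α−1)/2}/(T_∞ √π)`, the similarity-type functions
built from the unique positive solution `ν` of equation (24) solve the two-phase
Stefan problem (1)–(7) with variable latent heat `γ x^α` and a convective boundary
condition at the fixed face. -/
theorem statement_17 (α kl ks dl ds γ Ti Tinf h₀ : ℝ)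
    (hα : 0 < α) (hαnotint : ∀ n : ℤ, α ≠ n)
    (hkl : 0 < kl) (hks : 0 < ks) (hdl : 0 < dl) (hds : 0 < ds)
    (hγ : 0 < γ) (hTi : 0 < Ti) (hTinf : 0 < Tinf) (hh₀ : 0 < h₀)
    (ω : ℝ) (hω : ω = Real.sqrt (dl / ds))
    (hcond : h₀ > (2:ℝ) ^ α * Real.Gamma (α / 2 + 1) * ks * Ti * ds ^ ((α - 1) / 2)
      / (Tinf * Real.sqrt Real.pi))
    (ν : ℝ) (hνpos : 0 < ν)
    (hνeq :
      -(ks * Ti * ds ^ ((α - 1) / 2) / (γ * dl ^ ((α + 1) / 2))) *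
          (1 / tricomiU (α / 2 + 1 / 2) (1 / 2) (ν ^ 2 * ω ^ 2))
        + h₀ * Tinf / (γ * (2:ℝ) ^ α * dl ^ ((α + 1) / 2)) *
          (1 / (kummerM (α / 2 + 1 / 2) (1 / 2) (ν ^ 2)
                + 2 * Real.sqrt dl * h₀ / kl * ν * kummerM (α / 2 + 1) (3 / 2) (ν ^ 2)))
        = ν ^ (α + 1))
    (s : ℝ → ℝ) (hs : ∀ t : ℝ, s t = 2 * ν * Real.sqrt (dl * t))
    (Fl El Fs Es : ℝ)
    (hFl : Fl = -(2 * h₀ * Tinf * Real.sqrt dl * kummerM (-α / 2) (1 / 2) (-ν ^ 2)) /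
      (kl * kummerM (-α / 2) (1 / 2) (-ν ^ 2)
        + 2 * Real.sqrt dl * h₀ * ν * kummerM (-α / 2 + 1 / 2) (3 / 2) (-ν ^ 2)))
    (hEl : El = -ν * kummerM (-α / 2 + 1 / 2) (3 / 2) (-ν ^ 2) * Fl /
      kummerM (-α / 2) (1 / 2) (-ν ^ 2))
    (hFs : Fs = -Ti * (2:ℝ) ^ (α + 1) * ds ^ (α / 2) *
      kummerM (α / 2 + 1 / 2) (1 / 2) (ν ^ 2 * ω ^ 2) /
        tricomiU (α / 2 + 1 / 2) (1 / 2) (ν ^ 2 * ω ^ 2))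
    (hEs : Es = -ν * ω * kummerM (-α / 2 + 1 / 2) (3 / 2) (-(ν ^ 2 * ω ^ 2)) * Fs /
      kummerM (-α / 2) (1 / 2) (-(ν ^ 2 * ω ^ 2)))
    (Ψl Ψs : ℝ → ℝ → ℝ)
    (hΨl : ∀ x t : ℝ, Ψl x t =
      t ^ (α / 2) *
        (El * kummerM (-α / 2) (1 / 2) (-(x / (2 * Real.sqrt (dl * t))) ^ 2)
          + Fl * (x / (2 * Real.sqrt (dl * t))) *
              kummerM (-α / 2 + 1 / 2) (3 / 2) (-(x / (2 * Real.sqrt (dl * t))) ^ 2)))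
    (hΨs : ∀ x t : ℝ, Ψs x t =
      t ^ (α / 2) *
        (Es * kummerM (-α / 2) (1 / 2) (-(x / (2 * Real.sqrt (ds * t))) ^ 2)
          + Fs * (x / (2 * Real.sqrt (ds * t))) *
              kummerM (-α / 2 + 1 / 2) (3 / 2) (-(x / (2 * Real.sqrt (ds * t))) ^ 2))) :
    (∀ t : ℝ, 0 < t → ∀ x : ℝ, 0 < x → x < s t →
        deriv (fun τ => Ψl x τ) t = dl * deriv (deriv (fun y => Ψl y t)) x) ∧
    (∀ t : ℝ, 0 < t → ∀ x : ℝ, s t < x →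
        deriv (fun τ => Ψs x τ) t = ds * deriv (deriv (fun y => Ψs y t)) x) ∧
    (∀ t : ℝ, 0 < t → Ψl (s t) t = 0 ∧ Ψs (s t) t = 0) ∧
    (∀ t : ℝ, 0 < t →
        ks * deriv (fun y => Ψs y t) (s t) - kl * deriv (fun y => Ψl y t) (s t)
          = γ * (s t) ^ α * deriv s t) ∧
    (∀ t : ℝ, 0 < t →
        kl * deriv (fun y => Ψl y t) 0
          = h₀ * t ^ (-(1:ℝ) / 2) * (Ψl 0 t - Tinf * t ^ (α / 2))) ∧
    (∀ x : ℝ, 0 < x →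
        Filter.Tendsto (fun t : ℝ => Ψs x t) (nhdsWithin 0 (Set.Ioi 0))
          (nhds (-Ti * x ^ α))) := by
  obtain ⟨hliquid, hsolid, hboundary⟩ := statement_17_general α kl ks dl ds γ Ti Tinf h₀
    hα.le hkl hdl hds hγ.ne' hh₀.le ω hω ν hνpos hνeq s hs Fl El Fs Es hFl hEl hFs hEs Ψl Ψs hΨl hΨs
  exact ⟨fun t ht x _ _ => hliquid t ht x, fun t ht x _ => hsolid t ht x, hboundary⟩
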